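/- The higher Prony map is injective on minimal data: suppose two parameter tuples (x_1 < ⋯ < x_n; α_1, …, α_{n−d}) and (x'_1 < ⋯ < x'_n; α'_1, …, α'_{n−d}) both satisfy the coprimality condition that Q(t) = ∏_{r=1}^{n}(1 − x_r t) is coprime to R(t) = Σ_{i=1}^{n−d} α_i ∏_{r ∉ {i,…,i+d}}(1 − x_r t) (and likewise for the primed data), and that they produce the same normalized moments c_j = c'_j for 0 ≤ j ≤ 2n−1. Then x_r = x'_r for all r and α_i = α'_i for all i. -/

import Mathlib

open Finset Polynomial PowerSeries

/-- The complete homogeneous symmetric polynomial of degree `j` evaluated at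
`v : Fin m → ℝ` (sum of all monomials of total degree `j`, with `hsymm 0 v = 1`). -/
noncomputable def hsymm {m : ℕ} (j : ℕ) (v : Fin m → ℝ) : ℝ :=
  haveI := Classical.decPred (fun f : Fin j → Fin m => Monotone f)
  ∑ f ∈ Finset.univ.filter (fun f : Fin j → Fin m => Monotone f), ∏ i, v (f i)

/-- The normalized moment sequence: `c_j = 0` for `j < d` and
`c_{d+j} = Σ_{i=1}^{n-d} α_i h_j(x_i, …, x_{i+d})`. -/
noncomputable def cseq (d n : ℕ) (x : Fin n → ℝ) (α : Fin (n - d) → ℝ) (j : ℕ) : ℝ :=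
  if d ≤ j then
    ∑ i : Fin (n - d), α i * hsymm (j - d)
      (fun k : Fin (d + 1) => x ⟨i.1 + k.1, by have h1 := i.2; have h2 := k.2; omega⟩)
  else 0

/-- `Q(t) = ∏_{r=1}^{n} (1 - x_r t)`. -/
noncomputable def Qpoly (n : ℕ) (x : Fin n → ℝ) : Polynomial ℝ :=
  ∏ r : Fin n, (1 - Polynomial.C (x r) * Polynomial.X)

/-- `R(t) = Σ_{i=1}^{n-d} α_i ∏_{r ∉ {i,…,i+d}} (1 - x_r t)`. -/
noncomputable def Rpoly (d n : ℕ) (x : Fin n → ℝ) (α : Fin (n - d) → ℝ) : Polynomial ℝ :=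
  ∑ i : Fin (n - d), Polynomial.C (α i) *
    ∏ r ∈ Finset.univ.filter (fun r : Fin n => r.1 < i.1 ∨ i.1 + d < r.1),
      (1 - Polynomial.C (x r) * Polynomial.X)

/-!
The generating series of the complete homogeneous symmetric polynomials of a window is the inverse
of `∏ (1 - x_r t)` over that window, so the moments are the Taylor coefficients of the rational
function `t ^ d R(t) / Q(t)`. Two such fractions that agree up to order `2n - 1` agree, because
cross-multiplying gives polynomials of degree at most `2n - 1`. Coprimality and `Q(0) = 1` then
recover `Q` and `R` themselves. Reversing coefficients turns `Q` into `∏ (t - x_r)`, whose roots,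
including a possible node `0` invisible in `Q`, are the nodes. The cofactors of the windows are
linearly independent, so `R` determines the amplitudes.
-/

section TriangularFamilies

variable {ι R M : Type*} [LinearOrder ι] [Ring R] [NoZeroDivisors R] [AddCommGroup M]
  [Module R M]

lemma linearIndependent_of_triangular_dual (v : ι → M) (φ : ι → M →ₗ[R] R)
    (hdiag : ∀ i, φ i (v i) ≠ 0) (hupper : ∀ i j, i < j → φ i (v j) = 0) :
    LinearIndependent R v := by
  classical
  rw [linearIndependent_iff']
  intro s g hsum
  by_contra! ⟨i, hi, hgi⟩
  have hnonempty : (s.filter (g · ≠ 0)).Nonempty := ⟨i, Finset.mem_filter.mpr ⟨hi, hgi⟩⟩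
  obtain ⟨hk, hgk⟩ := Finset.mem_filter.mp (Finset.min'_mem _ hnonempty)
  set k := (s.filter (g · ≠ 0)).min' hnonempty
  have hother : ∀ j ∈ s, j ≠ k → g j * φ k (v j) = 0 := by
    intro j hj hjk
    by_cases hgj : g j = 0
    · rw [hgj, zero_mul]
    · have hle : k ≤ j := Finset.min'_le _ _ (Finset.mem_filter.mpr ⟨hj, hgj⟩)
      rw [hupper k j (hle.lt_of_ne' hjk), mul_zero]
  have happly : ∑ j ∈ s, g j * φ k (v j) = 0 := by
    simpa only [map_sum, map_smul, smul_eq_mul, map_zero] using congrArg (φ k) hsum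
  rw [Finset.sum_eq_single_of_mem k hk hother] at happly
  exact mul_ne_zero hgk (hdiag k) happly

end TriangularFamilies

section RationalFractions

variable {R : Type*}

lemma mul_eq_mul_of_trunc_eq [CommSemiring R] {F G : R⟦X⟧} {p q p' q' : R[X]} {N : ℕ}
    (hF : F * q = p) (hG : G * q' = p') (htrunc : trunc N F = trunc N G)
    (hdeg : (p * q').natDegree < N) (hdeg' : (p' * q).natDegree < N) :
    p * q' = p' * q := by
  have hpq : ((p * q' : R[X]) : R⟦X⟧) = F * (q * q') := by
    rw [Polynomial.coe_mul, ← hF, mul_assoc]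
  have hpq' : ((p' * q : R[X]) : R⟦X⟧) = G * (q * q') := by
    rw [Polynomial.coe_mul, ← hG, mul_assoc, mul_comm (q' : R⟦X⟧)]
  calc p * q' = trunc N (F * (q * q' : R⟦X⟧)) := by rw [← hpq, trunc_coe_eq_self hdeg]
    _ = trunc N (G * (q * q' : R⟦X⟧)) := by rw [← trunc_trunc_mul, htrunc, trunc_trunc_mul]
    _ = p' * q := by rw [← hpq', trunc_coe_eq_self hdeg']

lemma eq_of_associated_of_coeff_zero_eq_one [CommSemiring R] [NoZeroDivisors R] {p q : R[X]}
    (h : Associated p q) (hp : p.coeff 0 = 1) (hq : q.coeff 0 = 1) : p = q := by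
  obtain ⟨u, rfl⟩ := h
  obtain ⟨c, -, hc⟩ := Polynomial.isUnit_iff.mp u.isUnit
  have hc_one : c = 1 := by
    rwa [← hc, Polynomial.coeff_mul_C, hp, one_mul] at hq
  rw [← hc, hc_one, map_one, mul_one]

lemma eq_and_eq_of_mul_eq_mul_of_isCoprime [CommRing R] [IsDomain R] {p q p' q' : R[X]}
    (hcop : IsCoprime q p) (hcop' : IsCoprime q' p')
    (hq : q.coeff 0 = 1) (hq' : q'.coeff 0 = 1) (hcross : p * q' = p' * q) :
    q = q' ∧ p = p' := by
  have hdvd : q ∣ q' := hcop.dvd_of_dvd_mul_left (hcross ▸ dvd_mul_left q p')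
  have hdvd' : q' ∣ q := hcop'.dvd_of_dvd_mul_left (hcross ▸ dvd_mul_left q' p)
  have hqq' : q = q' :=
    eq_of_associated_of_coeff_zero_eq_one (associated_of_dvd_dvd hdvd hdvd') hq hq'
  subst hqq'
  have hq_ne_zero : q ≠ 0 := by
    rintro rfl
    simp at hq
  exact ⟨rfl, mul_right_cancel₀ hq_ne_zero hcross⟩

end RationalFractions

section ReversedLinearFactors

variable {ι R : Type*} [CommRing R]

lemma natDegree_prod_one_sub_C_mul_X_le (s : Finset ι) (x : ι → R) :
    (∏ r ∈ s, (1 - Polynomial.C (x r) * Polynomial.X)).natDegree ≤ #s := by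
  calc (∏ r ∈ s, (1 - Polynomial.C (x r) * Polynomial.X)).natDegree
      ≤ ∑ r ∈ s, (1 - Polynomial.C (x r) * Polynomial.X).natDegree :=
        Polynomial.natDegree_prod_le _ _
    _ ≤ ∑ _r ∈ s, 1 := by
        gcongr
        compute_degree
    _ = #s := (Finset.card_eq_sum_ones s).symm

lemma coeff_zero_prod_one_sub_C_mul_X (s : Finset ι) (x : ι → R) :
    (∏ r ∈ s, (1 - Polynomial.C (x r) * Polynomial.X)).coeff 0 = 1 := by
  simp [Polynomial.coeff_zero_prod]

lemma reflect_prod_one_sub_C_mul_X (s : Finset ι) (x : ι → R) :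
    (∏ r ∈ s, (1 - Polynomial.C (x r) * Polynomial.X)).reflect #s =
      ∏ r ∈ s, (Polynomial.X - Polynomial.C (x r)) := by
  classical
  induction s using Finset.induction_on with
  | empty => simp
  | insert a s ha ih =>
    have hfactor : (1 - Polynomial.C (x a) * Polynomial.X).reflect 1 =
        Polynomial.X - Polynomial.C (x a) := by
      simp [Polynomial.reflect_sub, Polynomial.reflect_C_mul]
    rw [Finset.prod_insert ha, Finset.prod_insert ha, Finset.card_insert_of_notMem ha, add_comm,
      Polynomial.reflect_mul _ _ (by compute_degree) (natDegree_prod_one_sub_C_mul_X_le s x),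
      hfactor, ih]

lemma range_eq_range_of_prod_one_sub_C_mul_X_eq [IsDomain R] [Fintype ι] {x x' : ι → R}
    (h : ∏ r, (1 - Polynomial.C (x r) * Polynomial.X) =
      ∏ r, (1 - Polynomial.C (x' r) * Polynomial.X)) :
    Set.range x = Set.range x' := by
  have hmonic : ∏ r, (Polynomial.X - Polynomial.C (x r)) =
      ∏ r, (Polynomial.X - Polynomial.C (x' r)) := by
    simpa only [reflect_prod_one_sub_C_mul_X] using
      congrArg (Polynomial.reflect #(univ : Finset ι)) h
  have mem_range_iff (y : ι → R) (t : R) :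
      t ∈ Set.range y ↔ (∏ r, (Polynomial.X - Polynomial.C (y r))).eval t = 0 := by
    simp [Polynomial.eval_prod, Finset.prod_eq_zero_iff, sub_eq_zero, eq_comm (a := t)]
  ext t
  rw [mem_range_iff, mem_range_iff, hmonic]

/-- `Polynomial.reflect N` as a linear map, so that evaluating a reflected polynomial at a point is
a linear functional. -/
noncomputable def reflectLinearMap (R : Type*) [Semiring R] (N : ℕ) : R[X] →ₗ[R] R[X] where
  toFun := Polynomial.reflect N
  map_add' p q := Polynomial.reflect_add p q N
  map_smul' c p := by
    simp only [Polynomial.smul_eq_C_mul, Polynomial.reflect_C_mul, RingHom.id_apply]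

lemma leval_reflectLinearMap_prod_one_sub_C_mul_X (s : Finset ι) (x : ι → R) (t : R) :
    (Polynomial.leval t ∘ₗ reflectLinearMap R #s)
      (∏ r ∈ s, (1 - Polynomial.C (x r) * Polynomial.X)) = ∏ r ∈ s, (t - x r) := by
  change ((∏ r ∈ s, (1 - Polynomial.C (x r) * Polynomial.X)).reflect #s).eval t = _
  simp [reflect_prod_one_sub_C_mul_X, Polynomial.eval_prod]

end ReversedLinearFactors

section CompleteHomogeneous

variable {j m : ℕ}

lemma monotone_cons_zero_iff {g : Fin j → Fin (m + 1)} :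
    Monotone (Fin.cons 0 g : Fin (j + 1) → Fin (m + 1)) ↔ Monotone g := by
  simp [Monotone, Fin.forall_fin_succ]

lemma monotone_succ_comp_iff {ι : Type*} [Preorder ι] {g : ι → Fin m} :
    Monotone (Fin.succ ∘ g) ↔ Monotone g := by
  simp [Monotone]

open Classical in
lemma sum_monotone_head_eq_zero (v : Fin (m + 1) → ℝ) :
    ∑ f : Fin (j + 1) → Fin (m + 1) with Monotone f ∧ f 0 = 0, ∏ i, v (f i) =
      v 0 * hsymm j v := by
  rw [hsymm, Finset.mul_sum]
  refine Finset.sum_nbij' Fin.tail (Fin.cons (α := fun _ => Fin (m + 1)) 0) ?_ ?_ ?_ ?_ ?_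
  all_goals
    simp only [Finset.mem_filter, Finset.mem_univ, true_and]
  · rintro f ⟨hf, -⟩
    exact hf.comp Fin.strictMono_succ.monotone
  · exact fun g hg => ⟨monotone_cons_zero_iff.mpr hg, rfl⟩
  · rintro f ⟨-, hf_zero⟩
    rw [← hf_zero, Fin.cons_self_tail]
  · exact fun g _ => rfl
  · rintro f ⟨-, hf_zero⟩
    rw [Fin.prod_univ_succ, hf_zero]
    rfl

open Classical in
lemma sum_monotone_head_ne_zero (v : Fin (m + 1) → ℝ) :
    ∑ f : Fin (j + 1) → Fin (m + 1) with Monotone f ∧ f 0 ≠ 0, ∏ i, v (f i) =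
      hsymm (j + 1) (Fin.tail v) := by
  rw [hsymm]
  refine (Finset.sum_nbij (Fin.succ ∘ ·) ?_ ?_ ?_ fun g _ => rfl).symm
  · intro g hg
    simp only [Finset.mem_filter, Finset.mem_univ, true_and] at hg ⊢
    exact ⟨monotone_succ_comp_iff.mpr hg, Fin.succ_ne_zero _⟩
  · exact ((Fin.succ_injective m).comp_left).injOn
  · intro f hf
    simp only [Finset.coe_filter, Finset.mem_univ, true_and, Set.mem_ofPred_eq] at hf
    have hf_ne_zero (i : Fin (j + 1)) : f i ≠ 0 :=
      ((Fin.pos_iff_ne_zero.mpr hf.2).trans_le (hf.1 (Fin.zero_le i))).ne'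
    obtain ⟨g, rfl⟩ : ∃ g, Fin.succ ∘ g = f :=
      ⟨fun i => (f i).pred (hf_ne_zero i), funext fun i => Fin.succ_pred _ _⟩
    exact ⟨g, by simpa using monotone_succ_comp_iff.mp hf.1, rfl⟩

@[simp]
lemma hsymm_zero (v : Fin m → ℝ) : hsymm 0 v = 1 := by
  have hmono (f : Fin 0 → Fin m) : Monotone f := fun i => i.elim0
  simp [hsymm, hmono]

lemma hsymm_succ_fin_zero (v : Fin 0 → ℝ) : hsymm (j + 1) v = 0 :=
  Finset.sum_eq_zero fun f _ => (f 0).elim0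

lemma hsymm_succ (v : Fin (m + 1) → ℝ) :
    hsymm (j + 1) v = v 0 * hsymm j v + hsymm (j + 1) (Fin.tail v) := by
  classical
  rw [← sum_monotone_head_eq_zero, ← sum_monotone_head_ne_zero, hsymm, ← Finset.filter_filter,
    ← Finset.filter_filter, Finset.sum_filter_add_sum_filter_not]
  congr!

lemma mk_hsymm_mul_one_sub_C_mul_X (v : Fin (m + 1) → ℝ) :
    PowerSeries.mk (hsymm · v) * ((1 - Polynomial.C (v 0) * Polynomial.X : ℝ[X]) : ℝ⟦X⟧) =
      PowerSeries.mk (hsymm · (Fin.tail v)) := by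
  ext (_ | j)
  · simp
  · simp [mul_sub, mul_left_comm _ (PowerSeries.C _), PowerSeries.coeff_succ_mul_X, hsymm_succ]

lemma mk_hsymm_mul_prod_one_sub_C_mul_X (v : Fin m → ℝ) :
    PowerSeries.mk (hsymm · v) *
      ((∏ k, (1 - Polynomial.C (v k) * Polynomial.X) : ℝ[X]) : ℝ⟦X⟧) = 1 := by
  induction m with
  | zero =>
    ext (_ | j)
    · simp
    · simp [hsymm_succ_fin_zero, PowerSeries.coeff_one]
  | succ m ih =>
    rw [Fin.prod_univ_succ, Polynomial.coe_mul, ← mul_assoc, mk_hsymm_mul_one_sub_C_mul_X]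
    exact ih (Fin.tail v)

end CompleteHomogeneous

section Windows

variable {d n : ℕ}

/-- The embedding `k ↦ i + k` onto the window `{i, …, i + d}` of consecutive node indices, with
indices counted from `0`. -/
def window (i : Fin (n - d)) : Fin (d + 1) ↪ Fin n where
  toFun k := ⟨i + k, by omega⟩
  inj' k l h := by
    simp only [Fin.mk.injEq] at h
    omega

@[simp]
lemma val_window (i : Fin (n - d)) (k : Fin (d + 1)) : (window i k).val = i + k := rfl

lemma mem_map_window {i : Fin (n - d)} {r : Fin n} :
    r ∈ univ.map (window i) ↔ i.1 ≤ r ∧ r.1 ≤ i + d := by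
  simp only [Finset.mem_map, Finset.mem_univ, true_and]
  constructor
  · rintro ⟨k, rfl⟩
    rw [val_window]
    omega
  · rintro ⟨hir, hrd⟩
    exact ⟨⟨r - i, by omega⟩, Fin.ext (Nat.add_sub_cancel' hir)⟩

lemma filter_lt_or_add_lt_eq_compl_map_window (i : Fin (n - d)) :
    univ.filter (fun r : Fin n => r.1 < i.1 ∨ i.1 + d < r.1) = (univ.map (window i))ᶜ := by
  ext r
  simp only [Finset.mem_filter, Finset.mem_univ, true_and, Finset.mem_compl, mem_map_window]
  omega

lemma card_compl_map_window (i : Fin (n - d)) : #(univ.map (window i))ᶜ = n - (d + 1) := by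
  rw [Finset.card_compl, Finset.card_map, Finset.card_univ, Fintype.card_fin, Fintype.card_fin]

/-- The cofactor `∏_{r ∉ {i, …, i + d}} (1 - x_r t)` of the window at `i` in `Q`. -/
noncomputable def windowCofactor {R : Type*} [CommRing R] (x : Fin n → R) (i : Fin (n - d)) :
    R[X] :=
  ∏ r ∈ (univ.map (window i))ᶜ, (1 - Polynomial.C (x r) * Polynomial.X)

-- The reflected cofactor of window `j` vanishes at `x_i` for `i < j`, since `i` lies to the left
-- of that window, whereas the reflected cofactor of window `i` does not.
lemma linearIndependent_windowCofactor {R : Type*} [CommRing R] [IsDomain R] {x : Fin n → R}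
    (hx : Function.Injective x) :
    LinearIndependent R (windowCofactor x : Fin (n - d) → R[X]) := by
  have heval (i j : Fin (n - d)) :
      (Polynomial.leval (x (window i 0)) ∘ₗ reflectLinearMap R (n - (d + 1)))
        (windowCofactor x j) = ∏ r ∈ (univ.map (window j))ᶜ, (x (window i 0) - x r) := by
    rw [← card_compl_map_window j]
    exact leval_reflectLinearMap_prod_one_sub_C_mul_X _ x _
  refine linearIndependent_of_triangular_dual _
    (fun i => Polynomial.leval (x (window i 0)) ∘ₗ reflectLinearMap R (n - (d + 1))) ?_ ?_
  · intro i
    rw [heval, Finset.prod_ne_zero_iff]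
    intro r hr hzero
    rw [← hx (sub_eq_zero.mp hzero)] at hr
    exact Finset.mem_compl.mp hr (Finset.mem_map_of_mem _ (Finset.mem_univ 0))
  · intro i j hij
    have hmem : window i 0 ∈ (univ.map (window j))ᶜ := by
      rw [Finset.mem_compl, mem_map_window]
      exact fun h => absurd h.1 (not_le.mpr hij)
    rw [heval]
    exact Finset.prod_eq_zero hmem (sub_self _)

end Windows

section Prony

variable {d n : ℕ}

lemma coeff_zero_Qpoly (x : Fin n → ℝ) : (Qpoly n x).coeff 0 = 1 :=
  coeff_zero_prod_one_sub_C_mul_X univ x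

lemma natDegree_Qpoly_le (x : Fin n → ℝ) : (Qpoly n x).natDegree ≤ n := by
  simpa [Qpoly] using natDegree_prod_one_sub_C_mul_X_le univ x

lemma eq_of_Qpoly_eq {x x' : Fin n → ℝ} (hx : StrictMono x) (hx' : StrictMono x')
    (h : Qpoly n x = Qpoly n x') : x = x' :=
  (hx.range_inj hx').mp (range_eq_range_of_prod_one_sub_C_mul_X_eq h)

lemma prod_window_mul_windowCofactor (x : Fin n → ℝ) (i : Fin (n - d)) :
    (∏ k, (1 - Polynomial.C (x (window i k)) * Polynomial.X)) * windowCofactor x i =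
      Qpoly n x := by
  rw [windowCofactor, Qpoly, ← Finset.prod_mul_prod_compl (univ.map (window i)), Finset.prod_map]

lemma Rpoly_eq_sum_windowCofactor (x : Fin n → ℝ) (α : Fin (n - d) → ℝ) :
    Rpoly d n x α = ∑ i, Polynomial.C (α i) * windowCofactor x i := by
  simp only [Rpoly, windowCofactor, filter_lt_or_add_lt_eq_compl_map_window]

lemma natDegree_Rpoly_le (x : Fin n → ℝ) (α : Fin (n - d) → ℝ) :
    (Rpoly d n x α).natDegree ≤ n - (d + 1) := by
  rw [Rpoly_eq_sum_windowCofactor]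
  refine Polynomial.natDegree_sum_le_of_forall_le _ _ fun i _ => ?_
  calc (Polynomial.C (α i) * windowCofactor x i).natDegree
      ≤ (windowCofactor x i).natDegree := Polynomial.natDegree_C_mul_le _ _
    _ ≤ #(univ.map (window i))ᶜ := natDegree_prod_one_sub_C_mul_X_le _ x
    _ = n - (d + 1) := card_compl_map_window i

lemma Rpoly_injective {x : Fin n → ℝ} (hx : Function.Injective x) :
    Function.Injective (Rpoly d n x) := by
  have hR : Rpoly d n x = Fintype.linearCombination ℝ (windowCofactor x) := by
    funext α
    simp only [Rpoly_eq_sum_windowCofactor, Fintype.linearCombination_apply,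
      Polynomial.smul_eq_C_mul]
  rw [hR]
  exact (linearIndependent_windowCofactor hx).fintypeLinearCombination_injective

lemma mk_cseq (x : Fin n → ℝ) (α : Fin (n - d) → ℝ) :
    PowerSeries.mk (cseq d n x α) = PowerSeries.X ^ d *
      ∑ i, PowerSeries.C (α i) * PowerSeries.mk (hsymm · (x ∘ window i)) := by
  ext j
  rw [PowerSeries.coeff_X_pow_mul', PowerSeries.coeff_mk, cseq]
  split_ifs
  · simp only [map_sum, PowerSeries.coeff_C_mul, PowerSeries.coeff_mk]
    rfl
  · rfl

lemma mk_hsymm_window_mul_Qpoly (x : Fin n → ℝ) (i : Fin (n - d)) :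
    PowerSeries.mk (hsymm · (x ∘ window i)) * (Qpoly n x : ℝ⟦X⟧) = windowCofactor x i := by
  have hinv : PowerSeries.mk (hsymm · (x ∘ window i)) *
      ((∏ k, (1 - Polynomial.C (x (window i k)) * Polynomial.X) : ℝ[X]) : ℝ⟦X⟧) = 1 :=
    mk_hsymm_mul_prod_one_sub_C_mul_X (x ∘ window i)
  rw [← prod_window_mul_windowCofactor x i, Polynomial.coe_mul, ← mul_assoc, hinv, one_mul]

lemma mk_cseq_mul_Qpoly (x : Fin n → ℝ) (α : Fin (n - d) → ℝ) :
    PowerSeries.mk (cseq d n x α) * (Qpoly n x : ℝ⟦X⟧) =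
      ((Polynomial.X ^ d * Rpoly d n x α : ℝ[X]) : ℝ⟦X⟧) := by
  have hR : (Rpoly d n x α : ℝ⟦X⟧) =
      ∑ i, PowerSeries.C (α i) * (windowCofactor x i : ℝ⟦X⟧) := by
    rw [Rpoly_eq_sum_windowCofactor, ← Polynomial.coeToPowerSeries.ringHom_apply, map_sum]
    simp only [map_mul, Polynomial.coeToPowerSeries.ringHom_apply, Polynomial.coe_C]
  rw [mk_cseq, mul_assoc, Finset.sum_mul, Polynomial.coe_mul, Polynomial.coe_pow,
    Polynomial.coe_X, hR]
  simp only [mul_assoc, mk_hsymm_window_mul_Qpoly]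

lemma natDegree_X_pow_mul_Rpoly_mul_Qpoly_lt (hn : d + 1 ≤ n) (x x' : Fin n → ℝ)
    (α : Fin (n - d) → ℝ) :
    (Polynomial.X ^ d * Rpoly d n x α * Qpoly n x').natDegree < 2 * n := by
  calc (Polynomial.X ^ d * Rpoly d n x α * Qpoly n x').natDegree
      ≤ d + (n - (d + 1)) + n :=
        Polynomial.natDegree_mul_le_of_le
          (Polynomial.natDegree_mul_le_of_le (Polynomial.natDegree_X_pow_le d)
            (natDegree_Rpoly_le x α))
          (natDegree_Qpoly_le x')
    _ < 2 * n := by omega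

lemma Rpoly_mul_Qpoly_eq_of_cseq_eq (hn : d + 1 ≤ n) {x x' : Fin n → ℝ}
    {α α' : Fin (n - d) → ℝ} (hmom : ∀ j < 2 * n, cseq d n x α j = cseq d n x' α' j) :
    Rpoly d n x α * Qpoly n x' = Rpoly d n x' α' * Qpoly n x := by
  have htrunc : trunc (2 * n) (PowerSeries.mk (cseq d n x α)) =
      trunc (2 * n) (PowerSeries.mk (cseq d n x' α')) := by
    ext j
    simp only [coeff_trunc, PowerSeries.coeff_mk]
    exact if_ctx_congr Iff.rfl (hmom j) fun _ => rfl
  have hcross := mul_eq_mul_of_trunc_eq (mk_cseq_mul_Qpoly x α) (mk_cseq_mul_Qpoly x' α') htrunc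
    (natDegree_X_pow_mul_Rpoly_mul_Qpoly_lt hn x x' α)
    (natDegree_X_pow_mul_Rpoly_mul_Qpoly_lt hn x' x α')
  rw [mul_assoc, mul_assoc] at hcross
  exact mul_left_cancel₀ (pow_ne_zero d Polynomial.X_ne_zero) hcross

end Prony

/-- **Injectivity of the higher Prony map on minimal data.** If two parameter
tuples `(x; α)` and `(x'; α')`, each satisfying the coprimality condition for
`Q` and `R`, produce the same normalized moments `c_j` for `0 ≤ j ≤ 2n - 1`,
then they coincide. -/
theorem higher_prony_map_injective (d n : ℕ) (hn : d + 1 ≤ n)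
    (x x' : Fin n → ℝ) (hx : StrictMono x) (hx' : StrictMono x')
    (α α' : Fin (n - d) → ℝ)
    (hcop : IsCoprime (Qpoly n x) (Rpoly d n x α))
    (hcop' : IsCoprime (Qpoly n x') (Rpoly d n x' α'))
    (hmom : ∀ j : ℕ, j ≤ 2 * n - 1 → cseq d n x α j = cseq d n x' α' j) :
    x = x' ∧ α = α' := by
  have hcross : Rpoly d n x α * Qpoly n x' = Rpoly d n x' α' * Qpoly n x :=
    Rpoly_mul_Qpoly_eq_of_cseq_eq hn fun j hj => hmom j (Nat.le_sub_one_of_lt hj)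
  obtain ⟨hQ, hR⟩ := eq_and_eq_of_mul_eq_mul_of_isCoprime hcop hcop'
    (coeff_zero_Qpoly x) (coeff_zero_Qpoly x') hcross
  obtain rfl : x = x' := eq_of_Qpoly_eq hx hx' hQ
  exact ⟨rfl, Rpoly_injective hx.injective hR⟩
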